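/- For any convex multiplicative system of means M, there exists p ∈ [1,∞] such that M agrees with the power mean M_p on uniform weightings: M(u_n, x) = M_p(u_n, x) for every n ≥ 1 and every x ∈ (ℝ≥0)^n, where u_n = (1/n,…,1/n) ∈ Δ_n. -/

import Mathlib

open scoped NNReal ENNReal BigOperators

/-- The power mean `M_p` of order `p ∈ [0,∞]` with weights `w` and arguments `x`. -/
noncomputable def powerMean (p : ℝ≥0∞) {n : ℕ} (w x : Fin n → ℝ≥0) : ℝ≥0 :=
  if p = ∞ then (Finset.univ.filter (fun i => 0 < w i)).sup x
  else if p = 0 then ∏ i, x i ^ ((w i : ℝ))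
  else (∑ i, w i * x i ^ p.toReal) ^ (1 / p.toReal)

/-- A system of means: for each `n`, a function `M n : Δ_n × ℝ≥0ⁿ → ℝ≥0`
(defined on all of `ℝ≥0ⁿ × ℝ≥0ⁿ`, with the axioms demanded only when `∑ w = 1`),
satisfying functoriality, consistency and monotonicity. -/
structure MeanSystem where
  M : ∀ n : ℕ, (Fin n → ℝ≥0) → (Fin n → ℝ≥0) → ℝ≥0
  functorial : ∀ {m n : ℕ} (f : Fin m → Fin n) (w : Fin m → ℝ≥0),
    (∑ i, w i) = 1 → ∀ x : Fin n → ℝ≥0,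
      M n (fun j => ∑ i ∈ Finset.univ.filter (fun i => f i = j), w i) x = M m w (x ∘ f)
  consistent : ∀ c : ℝ≥0, M 1 (fun _ => 1) (fun _ => c) = c
  mono : ∀ {n : ℕ} (w x y : Fin n → ℝ≥0), (∑ i, w i) = 1 →
    (∀ i, x i ≤ y i) → M n w x ≤ M n w y

/-- Multiplicativity of a system of means, with respect to the fixed bijection
`finProdFinEquiv : Fin m × Fin n ≃ Fin (m * n)`. -/
def MeanSystem.IsMultiplicative (S : MeanSystem) : Prop :=
  ∀ {m n : ℕ} (w x : Fin m → ℝ≥0) (v y : Fin n → ℝ≥0),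
    (∑ i, w i) = 1 → (∑ j, v j) = 1 →
    S.M (m * n) (fun k => w (finProdFinEquiv.symm k).1 * v (finProdFinEquiv.symm k).2)
        (fun k => x (finProdFinEquiv.symm k).1 * y (finProdFinEquiv.symm k).2)
      = S.M m w x * S.M n v y

/-- Convexity of a system of means. -/
def MeanSystem.IsConvex (S : MeanSystem) : Prop :=
  ∀ {n : ℕ} (w x y : Fin n → ℝ≥0), (∑ i, w i) = 1 →
    S.M n w (fun i => (x i + y i) / 2) ≤ max (S.M n w x) (S.M n w y)

/-! Evaluating `M` on indicators gives a monotone multiplicative function `φ` of the weight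
`t ∈ (0, 1]`, so `φ t = t ^ a` with `a ≥ 0`; convexity at two equal weights forces `φ (1/2) ≥ 1/2`,
i.e. `a ≤ 1`. The power mean of order `p = 1/a` has the same `φ`, and `φ` determines `M`: if `x`
takes `L` values, then `x` is a sum of `L` multiples of indicators, on each of which `M` and another
such `M'` agree and are at most `M'(w, x)`; summing in a binary tree, convexity gives
`M(w, x) ≤ 2 L M'(w, x)`. Applied to the tensor power of `x` with exponent `k`, which takes at most
`(k + 1) ^ n` values, this reads `M(w, x) ^ k ≤ 2 (k + 1) ^ n M'(w, x) ^ k`, and `k → ∞` removes the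
polynomial factor. -/

open Filter Topology
open scoped Finset

theorem le_of_forall_pow_le_poly_mul_pow {x y C : ℝ≥0} (d : ℕ)
    (h : ∀ k : ℕ, x ^ k ≤ C * ((k : ℝ≥0) + 1) ^ d * y ^ k) : x ≤ y := by
  refine le_of_forall_gt_imp_ge_of_dense fun z hyz => ?_
  by_contra! hzx
  have hx : 0 < x := hzx.pos
  set r : ℝ≥0 := z / x
  have hr0 : 0 < r := div_pos hyz.pos hx
  have hr1 : r < 1 := (div_lt_one hx).2 hzx
  have hbound (k : ℕ) : r ≤ C * (((k + 1 : ℕ) : ℝ≥0) ^ d * r ^ (k + 1)) := by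
    have hk : 1 ≤ C * ((k : ℝ≥0) + 1) ^ d * r ^ k := by
      rw [div_pow, ← mul_div_assoc, one_le_div (by positivity)]
      exact (h k).trans (by gcongr)
    calc r ≤ C * ((k : ℝ≥0) + 1) ^ d * r ^ k * r := le_mul_of_one_le_left' hk
      _ = C * (((k + 1 : ℕ) : ℝ≥0) ^ d * r ^ (k + 1)) := by push_cast; ring
  have hlim : Tendsto (fun k : ℕ => C * ((k : ℝ≥0) ^ d * r ^ k)) atTop (𝓝 0) := by
    rw [← NNReal.tendsto_coe]
    simpa using (tendsto_pow_const_mul_const_pow_of_lt_one d r.2 hr1).const_mul (C : ℝ)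
  exact hr0.not_ge (ge_of_tendsto' ((tendsto_add_atTop_iff_nat 1).2 hlim) hbound)

section SumBound

variable {E ι : Type*} [AddCommMonoid E] {G : E → ℝ≥0}

theorem apply_sum_le_two_pow_mul (hzero : G 0 = 0) (hadd : ∀ x y, G (x + y) ≤ 2 * max (G x) (G y))
    {f : ι → E} {B : ℝ≥0} {j : ℕ} {s : Finset ι} (hB : ∀ i ∈ s, G (f i) ≤ B) (hs : #s ≤ 2 ^ j) :
    G (∑ i ∈ s, f i) ≤ 2 ^ j * B := by
  classical
  induction j generalizing s with
  | zero =>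
    rcases Nat.le_one_iff_eq_zero_or_eq_one.1 hs with hs | hs
    · simp [Finset.card_eq_zero.1 hs, hzero]
    · obtain ⟨i, rfl⟩ := Finset.card_eq_one.1 hs
      simpa using hB i
  | succ j ih =>
    obtain ⟨t, hts, ht⟩ := Finset.exists_subset_card_eq (s := s) (n := #s / 2) (by omega)
    have hsum_t := ih (fun i hi => hB i (hts hi)) (by omega)
    have hsum_sdiff := ih (s := s \ t) (fun i hi => hB i (Finset.sdiff_subset hi))
      (by rw [Finset.card_sdiff_of_subset hts]; omega)
    calc G (∑ i ∈ s, f i) = G (∑ i ∈ s \ t, f i + ∑ i ∈ t, f i) := by rw [Finset.sum_sdiff hts]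
      _ ≤ 2 * max (G (∑ i ∈ s \ t, f i)) (G (∑ i ∈ t, f i)) := hadd _ _
      _ ≤ 2 * (2 ^ j * B) := by gcongr; exact max_le hsum_sdiff hsum_t
      _ = 2 ^ (j + 1) * B := by ring

theorem apply_sum_le_two_mul_card_mul (hzero : G 0 = 0)
    (hadd : ∀ x y, G (x + y) ≤ 2 * max (G x) (G y)) {f : ι → E} {B : ℝ≥0} {s : Finset ι}
    (hB : ∀ i ∈ s, G (f i) ≤ B) : G (∑ i ∈ s, f i) ≤ 2 * #s * B := by
  rcases s.eq_empty_or_nonempty with rfl | hs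
  · simp [hzero]
  have hlog : 2 ^ (Nat.log 2 #s + 1) ≤ 2 * #s := by
    rw [pow_succ']
    exact Nat.mul_le_mul_left 2 (Nat.pow_log_le_self 2 hs.card_pos.ne')
  refine (apply_sum_le_two_pow_mul hzero hadd hB
    (Nat.lt_pow_succ_log_self one_lt_two #s).le).trans ?_
  gcongr
  exact_mod_cast hlog

end SumBound

theorem card_image_prod_tuple_le {R ι : Type*} [CommMonoid R] [DecidableEq R] [Fintype ι]
    (x : ι → R) (k : ℕ) :
    #(Finset.univ.image fun c : Fin k → ι => ∏ j, x (c j)) ≤ (k + 1) ^ Fintype.card ι := by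
  classical
  have hsub : (Finset.univ.image fun c : Fin k → ι => ∏ j, x (c j)) ⊆
      (Fintype.piFinset fun _ : ι => Finset.range (k + 1)).image fun d => ∏ i, x i ^ d i := by
    refine Finset.image_subset_iff.2 fun c _ => Finset.mem_image.2
      ⟨fun i => #{j | c j = i}, Fintype.mem_piFinset.2 fun i => Finset.mem_range_succ_iff.2 ?_, ?_⟩
    · exact (Finset.card_le_univ _).trans_eq (Fintype.card_fin k)
    · simp_rw [← Finset.prod_const]
      exact Finset.prod_fiberwise' _ c x
  calc _ ≤ _ := Finset.card_le_card hsub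
    _ ≤ _ := Finset.card_image_le
    _ = _ := by simp

section UnitInterval

variable {φ ψ : Set.Ioc (0 : ℝ≥0) 1 →* ℝ≥0} {b : Set.Ioc (0 : ℝ≥0) 1}

theorem apply_le_apply_of_monotone_of_apply_eq (hφ : Monotone φ) (hψ : Monotone ψ) (hb : b < 1)
    (hφψ : φ b = ψ b) (hψb : ψ b ≠ 0) (t : Set.Ioc (0 : ℝ≥0) 1) : φ t ≤ ψ t := by
  refine le_of_forall_pow_le_poly_mul_pow (C := (ψ b)⁻¹) 0 fun k => ?_
  obtain ⟨l, hlt, hle⟩ : ∃ l : ℕ, b ^ (l + 1) < t ^ k ∧ t ^ k ≤ b ^ l := by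
    simpa [← Subtype.coe_lt_coe, ← Subtype.coe_le_coe] using
      exists_nat_pow_near_of_lt_one (pow_pos t.2.1 k) (pow_le_one₀ t.2.1.le t.2.2) b.2.1 hb
  calc φ t ^ k = φ (t ^ k) := (map_pow φ t k).symm
    _ ≤ φ (b ^ l) := hφ hle
    _ = (ψ b)⁻¹ * ψ (b ^ (l + 1)) := by
      rw [map_pow, map_pow, hφψ, pow_succ', inv_mul_cancel_left₀ hψb]
    _ ≤ (ψ b)⁻¹ * ψ (t ^ k) := by gcongr; exact hψ hlt.le
    _ = (ψ b)⁻¹ * ((k : ℝ≥0) + 1) ^ 0 * ψ t ^ k := by rw [map_pow, pow_zero, mul_one]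

theorem exists_forall_eq_rpow_of_monotone (hφ : Monotone φ) (hb : b < 1) (hφb : φ b ≠ 0) :
    ∃ a : ℝ, 0 ≤ a ∧ ∀ t, φ t = (t : ℝ≥0) ^ a := by
  have hb1 : (b : ℝ) < 1 := hb
  have hb0 : (0 : ℝ) < (b : ℝ≥0) := b.2.1
  have hφb1 : φ b ≤ 1 := (hφ hb.le).trans_eq (map_one φ)
  let a := Real.logb (b : ℝ≥0) (φ b)
  have ha : φ b = (b : ℝ≥0) ^ a :=
    NNReal.eq (Real.rpow_logb hb0 hb1.ne (NNReal.coe_pos.2 hφb.pos)).symm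
  have ha0 : 0 ≤ a :=
    div_nonneg_of_nonpos (Real.log_nonpos (φ b).2 hφb1) (Real.log_nonpos hb0.le hb1.le)
  let ψ : Set.Ioc (0 : ℝ≥0) 1 →* ℝ≥0 := (NNReal.rpowMonoidHom a).comp Set.Ioc.coeMonoidHom
  have hψ : Monotone ψ := fun s t hst => NNReal.rpow_le_rpow hst ha0
  exact ⟨a, ha0, fun t => le_antisymm
    (apply_le_apply_of_monotone_of_apply_eq hφ hψ hb ha (ne_of_eq_of_ne ha.symm hφb) t)
    (apply_le_apply_of_monotone_of_apply_eq hψ hφ hb ha.symm hφb t)⟩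

end UnitInterval

namespace MeanSystem

/-- The mean `M(w, x)` for weights and arguments indexed by an arbitrary finite type, obtained by
numbering its elements; the numbering is irrelevant by functoriality (`mean_eq_of_equiv`). -/
noncomputable def mean (S : MeanSystem) {ι : Type*} [Fintype ι] (w x : ι → ℝ≥0) : ℝ≥0 :=
  S.M (Fintype.card ι) (w ∘ (Fintype.equivFin ι).symm) (x ∘ (Fintype.equivFin ι).symm)

section Mean

variable (S : MeanSystem) {ι κ : Type*} [Fintype ι] {w : ι → ℝ≥0} {v : κ → ℝ≥0}

theorem M_pushforward [DecidableEq κ] {m n : ℕ} (eι : Fin m ≃ ι) (eκ : Fin n ≃ κ) (f : ι → κ)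
    (hw : ∑ i, w i = 1) (x : κ → ℝ≥0) :
    S.M n (fun l => ∑ i with f i = eκ l, w i) (x ∘ eκ) = S.M m (w ∘ eι) (x ∘ f ∘ eι) := by
  convert S.functorial (eκ.symm ∘ f ∘ eι) (w ∘ eι) ((Equiv.sum_comp eι w).trans hw) (x ∘ eκ)
    using 2
  · funext l
    simp only [Function.comp_apply, Finset.sum_filter, Equiv.symm_apply_eq]
    exact (Equiv.sum_comp eι fun i => if f i = eκ l then w i else 0).symm
  · funext k
    simp

variable [Fintype κ]

theorem mean_pushforward [DecidableEq κ] (f : ι → κ) (hw : ∑ i, w i = 1) (x : κ → ℝ≥0) :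
    S.mean (fun j => ∑ i with f i = j, w i) x = S.mean w (x ∘ f) :=
  S.M_pushforward (Fintype.equivFin ι).symm (Fintype.equivFin κ).symm f hw x

theorem mean_eq_of_equiv {n : ℕ} (e : Fin n ≃ ι) (hw : ∑ i, w i = 1) (x : ι → ℝ≥0) :
    S.mean w x = S.M n (w ∘ e) (x ∘ e) := by
  classical
  have hw_comp : (fun l => ∑ i with id i = e l, w i) = w ∘ e := by
    funext l
    simp [Finset.sum_filter]
  have h := S.M_pushforward (Fintype.equivFin ι).symm e id hw x
  rw [hw_comp] at h
  exact h.symm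

theorem mean_fin {n : ℕ} {w : Fin n → ℝ≥0} (hw : ∑ i, w i = 1) (x : Fin n → ℝ≥0) :
    S.mean w x = S.M n w x :=
  S.mean_eq_of_equiv (Equiv.refl _) hw x

theorem mean_comp_equiv (e : ι ≃ κ) (hv : ∑ j, v j = 1) (x : κ → ℝ≥0) :
    S.mean (v ∘ e) (x ∘ e) = S.mean v x :=
  (S.mean_eq_of_equiv ((Fintype.equivFin ι).symm.trans e) hv x).symm

theorem mean_const (hw : ∑ i, w i = 1) (c : ℝ≥0) : S.mean w (fun _ => c) = c := by
  have h := S.mean_pushforward (fun _ => (0 : Fin 1)) hw fun _ => c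
  have hone : (fun j : Fin 1 => ∑ i with (0 : Fin 1) = j, w i) = fun _ => 1 := by
    funext j
    simp [Subsingleton.elim 0 j, hw]
  rw [hone, S.mean_fin (by simp), S.consistent] at h
  exact h.symm

theorem mean_mono (hw : ∑ i, w i = 1) {x y : ι → ℝ≥0} (hxy : x ≤ y) : S.mean w x ≤ S.mean w y :=
  S.mono _ _ _ ((Equiv.sum_comp _ w).trans hw) fun _ => hxy _

end Mean

theorem sum_prod_weights {ι κ : Type*} [Fintype ι] [Fintype κ] {w : ι → ℝ≥0} {v : κ → ℝ≥0}
    (hw : ∑ i, w i = 1) (hv : ∑ j, v j = 1) : ∑ q : ι × κ, w q.1 * v q.2 = 1 := by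
  rw [Fintype.sum_prod_type, ← Fintype.sum_mul_sum, hw, hv, one_mul]

section Multiplicative

variable {S : MeanSystem} {ι κ : Type*} [Fintype ι] [Fintype κ] {w : ι → ℝ≥0} {v : κ → ℝ≥0}

theorem mean_prod (hmul : S.IsMultiplicative) (hw : ∑ i, w i = 1) (hv : ∑ j, v j = 1)
    (x : ι → ℝ≥0) (y : κ → ℝ≥0) :
    S.mean (fun q : ι × κ => w q.1 * v q.2) (fun q => x q.1 * y q.2) =
      S.mean w x * S.mean v y := by
  let eι := (Fintype.equivFin ι).symm
  let eκ := (Fintype.equivFin κ).symm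
  rw [S.mean_eq_of_equiv (finProdFinEquiv.symm.trans (eι.prodCongr eκ)) (sum_prod_weights hw hv)]
  exact hmul (w ∘ eι) (x ∘ eι) (v ∘ eκ) (y ∘ eκ) ((Equiv.sum_comp eι w).trans hw)
    ((Equiv.sum_comp eκ v).trans hv)

theorem mean_smul (hmul : S.IsMultiplicative) (hw : ∑ i, w i = 1) (c : ℝ≥0) (x : ι → ℝ≥0) :
    S.mean w (c • x) = c * S.mean w x := by
  have h := mean_prod hmul (w := fun _ : Unit => (1 : ℝ≥0)) (by simp) hw (fun _ => c) x
  rw [S.mean_const (by simp)] at h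
  rw [← h, ← S.mean_comp_equiv (Equiv.uniqueProd ι Unit) hw]
  congr 1
  funext q
  exact (one_mul _).symm

theorem sum_tensorPow_weights (hw : ∑ i, w i = 1) (k : ℕ) :
    ∑ c : Fin k → ι, ∏ j, w (c j) = 1 := by
  rw [← Fintype.sum_pow, hw, one_pow]

theorem mean_tensorPow (hmul : S.IsMultiplicative) (hw : ∑ i, w i = 1) (x : ι → ℝ≥0) (k : ℕ) :
    S.mean (fun c : Fin k → ι => ∏ j, w (c j)) (fun c => ∏ j, x (c j)) = S.mean w x ^ k := by
  induction k with
  | zero => simpa using S.mean_const (w := fun _ : Fin 0 → ι => (1 : ℝ≥0)) (by simp) 1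
  | succ k ih =>
    rw [pow_succ', ← ih, ← mean_prod hmul hw (sum_tensorPow_weights hw k),
      ← S.mean_comp_equiv (Fin.consEquiv fun _ => ι) (sum_tensorPow_weights hw (k + 1))]
    congr 1 <;> funext q <;> simp [Fin.consEquiv, Fin.prod_univ_succ]

theorem mean_add_le (hconv : S.IsConvex) (hmul : S.IsMultiplicative) (hw : ∑ i, w i = 1)
    (x y : ι → ℝ≥0) : S.mean w (x + y) ≤ 2 * max (S.mean w x) (S.mean w y) := by
  have hmid : x + y = (2 : ℝ≥0) • fun i => (x i + y i) / 2 := by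
    funext i
    exact (mul_div_cancel₀ (x i + y i) two_ne_zero).symm
  rw [hmid, mean_smul hmul hw]
  gcongr
  exact hconv _ _ _ ((Equiv.sum_comp _ w).trans hw)

end Multiplicative

/-- The mean of the indicator of an event of weight `t`, for weights `t ≤ 1`. -/
noncomputable def indicatorMean (S : MeanSystem) (t : ℝ≥0) : ℝ≥0 :=
  S.M 2 ![1 - t, t] ![0, 1]

section IndicatorMean

variable (S : MeanSystem) {ι : Type*} [Fintype ι] [DecidableEq ι] {w : ι → ℝ≥0}

theorem mean_indicator (hw : ∑ i, w i = 1) (s : Finset ι) :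
    S.mean w (fun i => if i ∈ s then 1 else 0) = S.indicatorMean (∑ i ∈ s, w i) := by
  let f (i : ι) : Fin 2 := if i ∈ s then 1 else 0
  have hweights : (fun j => ∑ i with f i = j, w i) = ![1 - ∑ i ∈ s, w i, ∑ i ∈ s, w i] := by
    have hcompl : ∑ i ∈ sᶜ, w i = 1 - ∑ i ∈ s, w i :=
      eq_tsub_of_add_eq ((s.sum_compl_add_sum w).trans hw)
    funext j
    fin_cases j
    · simp [f, ← hcompl, Finset.compl_eq_univ_sdiff, ← Finset.filter_notMem_eq_sdiff]
    · simp [f]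
  have h := S.mean_pushforward f hw ![0, 1]
  rw [hweights, S.mean_fin] at h
  · rw [indicatorMean, h]
    congr 1
    funext i
    simp [f, apply_ite]
  · rw [← hweights, Finset.sum_fiberwise, hw]

theorem mean_single (hw : ∑ i, w i = 1) (j : ι) :
    S.mean w (Pi.single j 1) = S.indicatorMean (w j) := by
  rw [← Finset.sum_singleton w j, ← S.mean_indicator hw]
  congr 1
  funext i
  simp [Pi.single_apply]

end IndicatorMean

theorem indicatorMean_zero (S : MeanSystem) : S.indicatorMean 0 = 0 := by
  simpa [S.mean_const] using (S.mean_indicator (w := fun _ : Unit => 1) (by simp) ∅).symm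

theorem indicatorMean_one (S : MeanSystem) : S.indicatorMean 1 = 1 := by
  simpa [S.mean_const] using (S.mean_indicator (w := fun _ : Unit => 1) (by simp) Finset.univ).symm

theorem indicatorMean_mono (S : MeanSystem) {s t : ℝ≥0} (hst : s ≤ t) (ht : t ≤ 1) :
    S.indicatorMean s ≤ S.indicatorMean t := by
  let w : Fin 3 → ℝ≥0 := ![1 - t, t - s, s]
  have hw : ∑ i, w i = 1 := by
    simp [w, Fin.sum_univ_three, add_assoc, tsub_add_cancel_of_le, hst, ht]
  have hw_s : ∑ i ∈ {2}, w i = s := by simp [w]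
  have hw_t : ∑ i ∈ {1, 2}, w i = t := by simp [w, tsub_add_cancel_of_le hst]
  rw [← hw_s, ← hw_t, ← S.mean_indicator hw, ← S.mean_indicator hw]
  refine S.mean_mono hw fun i => ?_
  fin_cases i <;> simp

theorem sum_two_weights {t : ℝ≥0} (ht : t ≤ 1) : ∑ i, ![1 - t, t] i = 1 := by
  simp [tsub_add_cancel_of_le ht]

theorem indicatorMean_mul {S : MeanSystem} (hmul : S.IsMultiplicative) {s t : ℝ≥0}
    (hs : s ≤ 1) (ht : t ≤ 1) :
    S.indicatorMean (s * t) = S.indicatorMean s * S.indicatorMean t := by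
  have hs' := sum_two_weights hs
  have ht' := sum_two_weights ht
  have hsingle : (Pi.single (1, 1) 1 : Fin 2 × Fin 2 → ℝ≥0) =
      fun q => (Pi.single 1 1 : Fin 2 → ℝ≥0) q.1 * (Pi.single 1 1 : Fin 2 → ℝ≥0) q.2 := by
    funext q
    simp only [Pi.single_apply, Prod.ext_iff, ite_and, ite_mul, one_mul, zero_mul]
  calc S.indicatorMean (s * t)
    _ = S.mean _ (Pi.single (1, 1) 1) := (S.mean_single (sum_prod_weights hs' ht') (1, 1)).symm
    _ = S.mean ![1 - s, s] (Pi.single 1 1) * S.mean ![1 - t, t] (Pi.single 1 1) := by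
      rw [hsingle, mean_prod hmul hs' ht']
    _ = S.indicatorMean s * S.indicatorMean t := by
      rw [S.mean_single hs', S.mean_single ht']
      rfl

theorem half_le_indicatorMean_half {S : MeanSystem} (hconv : S.IsConvex) :
    1 / 2 ≤ S.indicatorMean (1 / 2) := by
  let w : Fin 2 → ℝ≥0 := fun _ => 1 / 2
  have hw : ∑ i, w i = 1 := by simp [w]
  have hmid : (fun i => ((Pi.single 0 1 : Fin 2 → ℝ≥0) i + (Pi.single 1 1 : Fin 2 → ℝ≥0) i) / 2) =
      fun _ => 1 / 2 := by
    funext i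
    fin_cases i <;> simp
  have h := hconv w (Pi.single 0 1) (Pi.single 1 1) hw
  rwa [hmid, ← S.mean_fin hw, ← S.mean_fin hw, ← S.mean_fin hw, S.mean_const hw,
    S.mean_single hw, S.mean_single hw, max_self] at h

/-- `indicatorMean` as a homomorphism on the weights in `(0, 1]`. -/
noncomputable def indicatorMeanHom (S : MeanSystem) (hmul : S.IsMultiplicative) :
    Set.Ioc (0 : ℝ≥0) 1 →* ℝ≥0 where
  toFun t := S.indicatorMean t
  map_one' := S.indicatorMean_one
  map_mul' s t := indicatorMean_mul hmul s.2.2 t.2.2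

theorem exists_indicatorMean_eq_rpow {S : MeanSystem} (hconv : S.IsConvex)
    (hmul : S.IsMultiplicative) :
    ∃ a : ℝ, 0 ≤ a ∧ a ≤ 1 ∧ ∀ t : ℝ≥0, 0 < t → t ≤ 1 → S.indicatorMean t = t ^ a := by
  have hhalf : (1 / 2 : ℝ≥0) < 1 := NNReal.half_lt_self one_ne_zero
  let b : Set.Ioc (0 : ℝ≥0) 1 := ⟨1 / 2, by positivity, hhalf.le⟩
  have hb := half_le_indicatorMean_half hconv
  obtain ⟨a, ha0, ha⟩ := exists_forall_eq_rpow_of_monotone (φ := S.indicatorMeanHom hmul)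
    (b := b) (fun s t hst => S.indicatorMean_mono hst t.2.2) hhalf
    (lt_of_lt_of_le (by positivity) hb).ne'
  refine ⟨a, ha0, ?_, fun t ht0 ht1 => ha ⟨t, ht0, ht1⟩⟩
  by_contra! ha1
  have hlt : (1 / 2 : ℝ≥0) ^ a < 1 / 2 := by
    simpa using NNReal.rpow_lt_rpow_of_exponent_gt (by positivity) hhalf ha1
  exact hlt.not_ge (hb.trans_eq (ha b))

section Comparison

variable {S T : MeanSystem} {ι : Type*} [Fintype ι] {w : ι → ℝ≥0}

theorem mean_le_card_mul_mean (hSconv : S.IsConvex) (hSmul : S.IsMultiplicative)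
    (hTmul : T.IsMultiplicative) (hST : ∀ t ≤ 1, S.indicatorMean t = T.indicatorMean t)
    (hw : ∑ i, w i = 1) (x : ι → ℝ≥0) :
    S.mean w x ≤ 2 * #(Finset.univ.image x) * T.mean w x := by
  classical
  let level (v : ℝ≥0) (i : ι) : ℝ≥0 := if i ∈ Finset.univ.filter (x · = v) then 1 else 0
  have hlevel (v : ℝ≥0) : S.mean w (v • level v) ≤ T.mean w x := by
    have hweight : ∑ i with x i = v, w i ≤ 1 :=
      (Finset.sum_le_univ_sum_of_nonneg fun _ => zero_le).trans_eq hw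
    calc S.mean w (v • level v) = T.mean w (v • level v) := by
          rw [mean_smul hSmul hw, mean_smul hTmul hw, S.mean_indicator hw, T.mean_indicator hw,
            hST _ hweight]
      _ ≤ T.mean w x := T.mean_mono hw fun i => by
          by_cases hi : x i = v <;> simp [level, hi]
  have hdecomp : ∑ v ∈ Finset.univ.image x, v • level v = x := by
    funext i
    simp [level]
  simpa only [hdecomp] using apply_sum_le_two_mul_card_mul (G := S.mean w) (S.mean_const hw 0)
    (mean_add_le hSconv hSmul hw) fun v (_ : v ∈ Finset.univ.image x) => hlevel v

theorem mean_le_mean_of_indicatorMean_eq (hSconv : S.IsConvex) (hSmul : S.IsMultiplicative)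
    (hTmul : T.IsMultiplicative) (hST : ∀ t ≤ 1, S.indicatorMean t = T.indicatorMean t)
    (hw : ∑ i, w i = 1) (x : ι → ℝ≥0) : S.mean w x ≤ T.mean w x := by
  refine le_of_forall_pow_le_poly_mul_pow (C := 2) (Fintype.card ι) fun k => ?_
  rw [← mean_tensorPow hSmul hw, ← mean_tensorPow hTmul hw]
  refine (mean_le_card_mul_mean hSconv hSmul hTmul hST (sum_tensorPow_weights hw k) _).trans ?_
  gcongr
  exact_mod_cast card_image_prod_tuple_le x k

theorem mean_eq_mean_of_indicatorMean_eq (hSconv : S.IsConvex) (hSmul : S.IsMultiplicative)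
    (hTconv : T.IsConvex) (hTmul : T.IsMultiplicative)
    (hST : ∀ t ≤ 1, S.indicatorMean t = T.indicatorMean t) (hw : ∑ i, w i = 1) (x : ι → ℝ≥0) :
    S.mean w x = T.mean w x :=
  le_antisymm (mean_le_mean_of_indicatorMean_eq hSconv hSmul hTmul hST hw x)
    (mean_le_mean_of_indicatorMean_eq hTconv hTmul hSmul (fun t ht => (hST t ht).symm) hw x)

end Comparison

end MeanSystem

section PowerMean

variable {p : ℝ≥0∞}

theorem powerMean_top {n : ℕ} (w x : Fin n → ℝ≥0) :
    powerMean ∞ w x = (Finset.univ.filter fun i => 0 < w i).sup x :=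
  if_pos rfl

theorem powerMean_of_ne_zero_of_ne_top (hp0 : p ≠ 0) (hp : p ≠ ∞) {n : ℕ} (w x : Fin n → ℝ≥0) :
    powerMean p w x = (∑ i, w i * x i ^ p.toReal) ^ p.toReal⁻¹ := by
  rw [powerMean, if_neg hp, if_neg hp0, one_div]

theorem powerMean_pushforward (hp0 : p ≠ 0) {m n : ℕ} (f : Fin m → Fin n) (w : Fin m → ℝ≥0)
    (x : Fin n → ℝ≥0) :
    powerMean p (fun j => ∑ i with f i = j, w i) x = powerMean p w (x ∘ f) := by
  rcases eq_or_ne p ∞ with rfl | hp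
  · have hsupport : (Finset.univ.filter fun j => 0 < ∑ i with f i = j, w i) =
        (Finset.univ.filter fun i => 0 < w i).image f := by
      ext j
      simp [pos_iff_ne_zero, Finset.sum_eq_zero_iff, and_comm]
    rw [powerMean_top, powerMean_top, hsupport, Finset.sup_image]
  · rw [powerMean_of_ne_zero_of_ne_top hp0 hp, powerMean_of_ne_zero_of_ne_top hp0 hp,
      ← Finset.sum_fiberwise _ f]
    congr 1
    refine Finset.sum_congr rfl fun j _ => ?_
    rw [Finset.sum_mul]
    refine Finset.sum_congr rfl fun i hi => ?_
    rw [Function.comp_apply, (Finset.mem_filter.1 hi).2]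

theorem powerMean_one_const (hp0 : p ≠ 0) (c : ℝ≥0) :
    powerMean p (fun _ : Fin 1 => 1) (fun _ => c) = c := by
  rcases eq_or_ne p ∞ with rfl | hp
  · simp [powerMean_top]
  · simp [powerMean_of_ne_zero_of_ne_top hp0 hp,
      NNReal.rpow_rpow_inv (ENNReal.toReal_ne_zero.2 ⟨hp0, hp⟩)]

theorem powerMean_mono (hp0 : p ≠ 0) {n : ℕ} (w : Fin n → ℝ≥0) {x y : Fin n → ℝ≥0}
    (hxy : ∀ i, x i ≤ y i) : powerMean p w x ≤ powerMean p w y := by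
  rcases eq_or_ne p ∞ with rfl | hp
  · rw [powerMean_top, powerMean_top]
    exact Finset.sup_mono_fun fun i _ => hxy i
  · rw [powerMean_of_ne_zero_of_ne_top hp0 hp, powerMean_of_ne_zero_of_ne_top hp0 hp]
    gcongr with i
    exact hxy i

theorem powerMean_prod (hp0 : p ≠ 0) {m n : ℕ} (w x : Fin m → ℝ≥0) (v y : Fin n → ℝ≥0) :
    powerMean p (fun k => w (finProdFinEquiv.symm k).1 * v (finProdFinEquiv.symm k).2)
        (fun k => x (finProdFinEquiv.symm k).1 * y (finProdFinEquiv.symm k).2) =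
      powerMean p w x * powerMean p v y := by
  rcases eq_or_ne p ∞ with rfl | hp
  · have hsupport : (Finset.univ.filter fun k =>
          0 < w (finProdFinEquiv.symm k).1 * v (finProdFinEquiv.symm k).2) =
        ((Finset.univ.filter fun i => 0 < w i) ×ˢ (Finset.univ.filter fun j => 0 < v j)).map
          finProdFinEquiv.toEmbedding := by
      ext k
      simp [Finset.mem_map_equiv, pos_iff_ne_zero]
    simp only [powerMean_top, hsupport, Finset.sup_map, Finset.sup_product_right,
      NNReal.finset_sup_mul, NNReal.mul_finset_sup, Function.comp_apply, Equiv.toEmbedding_apply,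
      Equiv.symm_apply_apply]
  · simp only [powerMean_of_ne_zero_of_ne_top hp0 hp]
    rw [← NNReal.mul_rpow, Fintype.sum_mul_sum, ← Fintype.sum_prod_type',
      ← finProdFinEquiv.sum_comp]
    congr 1
    refine Finset.sum_congr rfl fun q _ => ?_
    rw [Equiv.symm_apply_apply, NNReal.mul_rpow, mul_mul_mul_comm]

theorem add_div_two_le_max (a b : ℝ≥0) : (a + b) / 2 ≤ max a b := by
  refine div_le_of_le_mul₀ zero_le zero_le ?_
  rw [mul_two]
  exact add_le_add (le_max_left a b) (le_max_right a b)

theorem powerMean_midpoint_le (hp1 : 1 ≤ p) {n : ℕ} (w x y : Fin n → ℝ≥0) :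
    powerMean p w (fun i => (x i + y i) / 2) ≤ max (powerMean p w x) (powerMean p w y) := by
  rcases eq_or_ne p ∞ with rfl | hp
  · simp only [powerMean_top]
    exact Finset.sup_le fun i hi => (add_div_two_le_max (x i) (y i)).trans
      (max_le_max (Finset.le_sup hi) (Finset.le_sup hi))
  · have hp0 : p ≠ 0 := (one_pos.trans_le hp1).ne'
    have hr : 1 ≤ p.toReal := ENNReal.toReal_mono hp hp1
    simp only [powerMean_of_ne_zero_of_ne_top hp0 hp]
    rw [← (NNReal.monotone_rpow_of_nonneg (by positivity)).map_max]
    gcongr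
    calc ∑ i, w i * ((x i + y i) / 2) ^ p.toReal
      _ ≤ ∑ i, w i * ((x i ^ p.toReal + y i ^ p.toReal) / 2) := by
        gcongr with i
        simpa [div_eq_inv_mul, mul_add] using NNReal.rpow_arith_mean_le_arith_mean2_rpow
          (1 / 2) (1 / 2) (x i) (y i) (add_halves 1) hr
      _ = (∑ i, w i * x i ^ p.toReal + ∑ i, w i * y i ^ p.toReal) / 2 := by
        rw [← Finset.sum_add_distrib, Finset.sum_div]
        exact Finset.sum_congr rfl fun i _ => by ring
      _ ≤ max (∑ i, w i * x i ^ p.toReal) (∑ i, w i * y i ^ p.toReal) :=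
        add_div_two_le_max _ _

theorem powerMean_indicator (hp0 : p ≠ 0) {t : ℝ≥0} (ht : 0 < t) :
    powerMean p ![1 - t, t] ![0, 1] = t ^ p⁻¹.toReal := by
  rcases eq_or_ne p ∞ with rfl | hp
  · rw [powerMean_top, ENNReal.inv_top, ENNReal.toReal_zero, NNReal.rpow_zero]
    refine le_antisymm (Finset.sup_le fun i _ => ?_)
      (Finset.le_sup (f := ![(0 : ℝ≥0), 1]) (b := 1) (by simpa using ht))
    fin_cases i <;> simp
  · rw [powerMean_of_ne_zero_of_ne_top hp0 hp]
    simp [ENNReal.toReal_inv, ENNReal.toReal_ne_zero, hp0, hp]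

/-- The power means of order `p ≠ 0` as a system of means. -/
noncomputable def powerMeanSystem (hp0 : p ≠ 0) : MeanSystem where
  M _ := powerMean p
  functorial f w _ x := powerMean_pushforward hp0 f w x
  consistent := powerMean_one_const hp0
  mono w _ _ _ := powerMean_mono hp0 w

theorem powerMeanSystem_isMultiplicative (hp0 : p ≠ 0) :
    (powerMeanSystem hp0).IsMultiplicative :=
  fun w x v y _ _ => powerMean_prod hp0 w x v y

theorem powerMeanSystem_isConvex (hp0 : p ≠ 0) (hp1 : 1 ≤ p) : (powerMeanSystem hp0).IsConvex :=
  fun w x y _ => powerMean_midpoint_le hp1 w x y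

end PowerMean

theorem meanSystem_uniform_eq_powerMean_general (S : MeanSystem)
    (hconv : S.IsConvex) (hmul : S.IsMultiplicative) :
    ∃ p : ℝ≥0∞, 1 ≤ p ∧ ∀ (n : ℕ) (w : Fin n → ℝ≥0), ∑ i, w i = 1 → ∀ x : Fin n → ℝ≥0,
      S.M n w x = powerMean p w x := by
  obtain ⟨a, ha0, ha1, ha⟩ := MeanSystem.exists_indicatorMean_eq_rpow hconv hmul
  let p : ℝ≥0∞ := (ENNReal.ofReal a)⁻¹
  have hp1 : 1 ≤ p := ENNReal.one_le_inv.2 (ENNReal.ofReal_le_one.2 ha1)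
  have hp0 : p ≠ 0 := (one_pos.trans_le hp1).ne'
  have hST (t : ℝ≥0) (ht : t ≤ 1) :
      S.indicatorMean t = (powerMeanSystem hp0).indicatorMean t := by
    rcases eq_zero_or_pos t with rfl | ht0
    · rw [S.indicatorMean_zero, MeanSystem.indicatorMean_zero]
    · refine (ha t ht0 ht).trans ((powerMean_indicator hp0 ht0).trans ?_).symm
      rw [inv_inv, ENNReal.toReal_ofReal ha0]
  refine ⟨p, hp1, fun n w hw x => ?_⟩
  rw [← S.mean_fin hw, MeanSystem.mean_eq_mean_of_indicatorMean_eq hconv hmul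
    (powerMeanSystem_isConvex hp0 hp1) (powerMeanSystem_isMultiplicative hp0) hST hw,
    MeanSystem.mean_fin _ hw]
  rfl

/-- For any convex multiplicative system of means `M`, there is `p ∈ [1,∞]` such that
`M` agrees with the power mean `M_p` on uniform weightings. -/
theorem meanSystem_uniform_eq_powerMean (S : MeanSystem)
    (hconv : S.IsConvex) (hmul : S.IsMultiplicative) :
    ∃ p : ℝ≥0∞, 1 ≤ p ∧ ∀ (n : ℕ), 1 ≤ n → ∀ x : Fin n → ℝ≥0,
      S.M n (fun _ => (n : ℝ≥0)⁻¹) x = powerMean p (fun _ => (n : ℝ≥0)⁻¹) x := by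
  obtain ⟨p, hp1, hp⟩ := meanSystem_uniform_eq_powerMean_general S hconv hmul
  exact ⟨p, hp1, fun n hn x => hp n _ (by simp [Nat.one_le_iff_ne_zero.1 hn]) x⟩
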